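/- Fix κ ∈ ℂ with κ ≠ 0 and real momenta p₁, p₂. Set A := 1 + exp(i(p₁+p₂)), assume A − 2κ⁻¹·exp(i p₁) ≠ 0, and define S̃ := −(A − 2κ⁻¹·exp(i p₂))/(A − 2κ⁻¹·exp(i p₁)). Define ψ : ℤ × ℤ → ℂ by ψ(x,y) = exp(i(p₁x + p₂y)) + S̃ · exp(i(p₂x + p₁y)), and set E := E(p₁) + E(p₂) with E(p) := 2(1+κ²) − 4κ cos p. Then: (a) for all integers x, y with y > x + 1 (bulk equation), (4+4κ²)ψ(x,y) − 2κ[ψ(x−1,y) + ψ(x+1,y) + ψ(x,y−1) + ψ(x,y+1)] = E·ψ(x,y); and (b) for all integers x (contact equation for the adjacent pair Q̃ Q), 4κ²·ψ(x,x+1) − 2κ·ψ(x−1,x+1) − 2κ·ψ(x,x+2) = E·ψ(x,x+1). Thus the opposite ordering of the two magnons is diagonalized by the scattering amplitude S̃(p₁,p₂,κ) = S(p₁,p₂,κ⁻¹), obtained from S by κ ↦ 1/κ. -/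

import Mathlib

/-!
Each plane wave `e^{i(px + qy)}` solves the bulk equation on the whole lattice `ℤ × ℤ`, hence so
does any superposition of the two waves obtained by exchanging the momenta. On an adjacent pair the
bulk and contact equations differ by `4ψ(x, x+1) = 2κ(ψ(x, x) + ψ(x+1, x+1))`. Translating the pair
multiplies `ψ` by `e^{i(p₁+p₂)}`, so this is a single linear equation for the relative amplitude of
the two waves, independent of `x`; its solution is `S(p₁, p₂, κ⁻¹)`.
-/

section Hamiltonian

variable {R : Type*} [CommRing R]

/-- The two-magnon Hamiltonian on non-adjacent magnons at `x` and `y`, extended to all of `ℤ × ℤ`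
by the same formula. -/
def bulkHamiltonian (κ : R) (ψ : ℤ → ℤ → R) (x y : ℤ) : R :=
  (4 + 4 * κ ^ 2) * ψ x y -
    2 * κ * (ψ (x - 1) y + ψ (x + 1) y + ψ x (y - 1) + ψ x (y + 1))

/-- The two-magnon Hamiltonian on an adjacent pair `Q̃ Q` at `x` and `x + 1`: the link carries no
energy and only the two outward hops remain. -/
def contactHamiltonian (κ : R) (ψ : ℤ → ℤ → R) (x : ℤ) : R :=
  4 * κ ^ 2 * ψ x (x + 1) - 2 * κ * ψ (x - 1) (x + 1) - 2 * κ * ψ x (x + 2)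

theorem bulkHamiltonian_sub_contactHamiltonian (κ : R) (ψ : ℤ → ℤ → R) (x : ℤ) :
    bulkHamiltonian κ ψ x (x + 1) - contactHamiltonian κ ψ x =
      4 * ψ x (x + 1) - 2 * κ * (ψ x x + ψ (x + 1) (x + 1)) := by
  rw [bulkHamiltonian, contactHamiltonian, add_sub_cancel_right, add_assoc x 1 1,
    one_add_one_eq_two]
  ring

theorem bulkHamiltonian_add_mul (κ c : R) (φ χ : ℤ → ℤ → R) (x y : ℤ) :
    bulkHamiltonian κ (fun x y ↦ φ x y + c * χ x y) x y =
      bulkHamiltonian κ φ x y + c * bulkHamiltonian κ χ x y := by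
  simp only [bulkHamiltonian]
  ring

theorem bulkHamiltonian_zpow_mul_zpow {K : Type*} [Field K] (κ : K) {a b : K}
    (ha : a ≠ 0) (hb : b ≠ 0) (x y : ℤ) :
    bulkHamiltonian κ (fun x y ↦ a ^ x * b ^ y) x y =
      (4 + 4 * κ ^ 2 - 2 * κ * (a + a⁻¹ + b + b⁻¹)) * (a ^ x * b ^ y) := by
  simp only [bulkHamiltonian, zpow_add_one₀ ha, zpow_add_one₀ hb, zpow_sub_one₀ ha,
    zpow_sub_one₀ hb]
  ring

end Hamiltonian

section Bethe

open Complex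

/-- The wavefunction of two free magnons, of momentum `p` at `x` and of momentum `q` at `y`. Momenta
may be complex. -/
noncomputable def planeWave (p q : ℂ) (x y : ℤ) : ℂ :=
  exp (I * (p * x + q * y))

/-- The Bethe ansatz: incoming wave plus `S` times the wave with exchanged momenta. -/
noncomputable def betheWave (S p₁ p₂ : ℂ) (x y : ℤ) : ℂ :=
  planeWave p₁ p₂ x y + S * planeWave p₂ p₁ x y

/-- The one-magnon dispersion relation `E(p)`. -/
noncomputable def magnonEnergy (κ p : ℂ) : ℂ :=
  2 * (1 + κ ^ 2) - 4 * κ * cos p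

/-- The scattering amplitude `S(p₁, p₂, κ)`, equal to `0` by convention where its denominator
vanishes. The ordering `Q̃ Q` scatters with `S(p₁, p₂, κ⁻¹)`. -/
noncomputable def scatteringAmplitude (p₁ p₂ κ : ℂ) : ℂ :=
  -(1 + exp (I * (p₁ + p₂)) - 2 * κ * exp (I * p₂)) /
    (1 + exp (I * (p₁ + p₂)) - 2 * κ * exp (I * p₁))

theorem planeWave_eq_zpow_mul_zpow (p q : ℂ) (x y : ℤ) :
    planeWave p q x y = exp (I * p) ^ x * exp (I * q) ^ y := by
  rw [planeWave, ← exp_int_mul, ← exp_int_mul, ← exp_add]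
  ring_nf

theorem planeWave_diag (p q : ℂ) (x : ℤ) : planeWave p q x x = exp (I * (p + q)) ^ x := by
  rw [planeWave_eq_zpow_mul_zpow, ← mul_zpow, ← exp_add, mul_add]

theorem planeWave_add_one_right (p q : ℂ) (x y : ℤ) :
    planeWave p q x (y + 1) = planeWave p q x y * exp (I * q) := by
  rw [planeWave_eq_zpow_mul_zpow, planeWave_eq_zpow_mul_zpow, zpow_add_one₀ (exp_ne_zero _),
    mul_assoc]

theorem betheWave_diag (S p₁ p₂ : ℂ) (x : ℤ) :
    betheWave S p₁ p₂ x x = exp (I * (p₁ + p₂)) ^ x * (1 + S) := by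
  rw [betheWave, planeWave_diag, planeWave_diag, add_comm p₂ p₁]
  ring

theorem betheWave_adjacent (S p₁ p₂ : ℂ) (x : ℤ) :
    betheWave S p₁ p₂ x (x + 1) =
      exp (I * (p₁ + p₂)) ^ x * (exp (I * p₂) + S * exp (I * p₁)) := by
  rw [betheWave, planeWave_add_one_right, planeWave_add_one_right, planeWave_diag, planeWave_diag,
    add_comm p₂ p₁]
  ring

theorem magnonEnergy_eq_exp_add_inv (κ p : ℂ) :
    magnonEnergy κ p = 2 * (1 + κ ^ 2) - 2 * κ * (exp (I * p) + (exp (I * p))⁻¹) := by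
  rw [magnonEnergy, cos, ← exp_neg, neg_mul, mul_comm p I]
  ring

theorem bulkHamiltonian_planeWave (κ p q : ℂ) (x y : ℤ) :
    bulkHamiltonian κ (planeWave p q) x y =
      (magnonEnergy κ p + magnonEnergy κ q) * planeWave p q x y := by
  have hwave : planeWave p q = fun x y ↦ exp (I * p) ^ x * exp (I * q) ^ y :=
    funext₂ (planeWave_eq_zpow_mul_zpow p q)
  rw [hwave, bulkHamiltonian_zpow_mul_zpow κ (exp_ne_zero _) (exp_ne_zero _),
    magnonEnergy_eq_exp_add_inv, magnonEnergy_eq_exp_add_inv]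
  ring

theorem bulkHamiltonian_betheWave (κ S p₁ p₂ : ℂ) (x y : ℤ) :
    bulkHamiltonian κ (betheWave S p₁ p₂) x y =
      (magnonEnergy κ p₁ + magnonEnergy κ p₂) * betheWave S p₁ p₂ x y := by
  calc bulkHamiltonian κ (betheWave S p₁ p₂) x y
      = bulkHamiltonian κ (planeWave p₁ p₂) x y + S * bulkHamiltonian κ (planeWave p₂ p₁) x y :=
        bulkHamiltonian_add_mul κ S _ _ x y
    _ = (magnonEnergy κ p₁ + magnonEnergy κ p₂) * betheWave S p₁ p₂ x y := by
        rw [bulkHamiltonian_planeWave, bulkHamiltonian_planeWave, betheWave]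
        ring

theorem contactHamiltonian_betheWave {κ S p₁ p₂ : ℂ}
    (hS : κ * (1 + exp (I * (p₁ + p₂))) * (1 + S) = 2 * (exp (I * p₂) + S * exp (I * p₁)))
    (x : ℤ) :
    contactHamiltonian κ (betheWave S p₁ p₂) x =
      (magnonEnergy κ p₁ + magnonEnergy κ p₂) * betheWave S p₁ p₂ x (x + 1) := by
  have hmatch : 4 * betheWave S p₁ p₂ x (x + 1) -
      2 * κ * (betheWave S p₁ p₂ x x + betheWave S p₁ p₂ (x + 1) (x + 1)) = 0 := by
    rw [betheWave_adjacent, betheWave_diag, betheWave_diag, zpow_add_one₀ (exp_ne_zero _)]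
    linear_combination -2 * exp (I * (p₁ + p₂)) ^ x * hS
  rw [← bulkHamiltonian_betheWave, eq_comm, ← sub_eq_zero, bulkHamiltonian_sub_contactHamiltonian,
    hmatch]

theorem scatteringAmplitude_inv_spec {κ p₁ p₂ : ℂ} (hκ : κ ≠ 0)
    (hden : 1 + exp (I * (p₁ + p₂)) - 2 * κ⁻¹ * exp (I * p₁) ≠ 0) :
    κ * (1 + exp (I * (p₁ + p₂))) * (1 + scatteringAmplitude p₁ p₂ κ⁻¹) =
      2 * (exp (I * p₂) + scatteringAmplitude p₁ p₂ κ⁻¹ * exp (I * p₁)) := by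
  have hcross : scatteringAmplitude p₁ p₂ κ⁻¹ *
      (1 + exp (I * (p₁ + p₂)) - 2 * κ⁻¹ * exp (I * p₁)) =
        -(1 + exp (I * (p₁ + p₂)) - 2 * κ⁻¹ * exp (I * p₂)) :=
    div_mul_cancel₀ _ hden
  linear_combination κ * hcross +
    2 * (exp (I * p₂) + scatteringAmplitude p₁ p₂ κ⁻¹ * exp (I * p₁)) * mul_inv_cancel₀ hκ

theorem two_magnon_bethe_QtQ_general {κ p₁ p₂ : ℂ} (hκ : κ ≠ 0)
    (hden : 1 + exp (I * (p₁ + p₂)) - 2 * κ⁻¹ * exp (I * p₁) ≠ 0)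
    {ψ : ℤ → ℤ → ℂ} (hψ : ∀ x y, ψ x y = betheWave (scatteringAmplitude p₁ p₂ κ⁻¹) p₁ p₂ x y) :
    (∀ x y : ℤ, bulkHamiltonian κ ψ x y = (magnonEnergy κ p₁ + magnonEnergy κ p₂) * ψ x y) ∧
      ∀ x : ℤ, contactHamiltonian κ ψ x =
        (magnonEnergy κ p₁ + magnonEnergy κ p₂) * ψ x (x + 1) := by
  obtain rfl := funext₂ hψ
  exact ⟨bulkHamiltonian_betheWave κ _ p₁ p₂,
    contactHamiltonian_betheWave (scatteringAmplitude_inv_spec hκ hden)⟩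

end Bethe

/-- The two-magnon Bethe wavefunction for the opposite (Q̃ Q) ordering, with
scattering amplitude `S̃ = −(A − 2κ⁻¹e^{ip₂})/(A − 2κ⁻¹e^{ip₁})`, `A = 1 + e^{i(p₁+p₂)}`,
satisfies the bulk and contact Schrödinger equations of the one-loop 'SU(2)' sector
of the N=2 interpolating quiver theory (contact diagonal energy `4κ²`), with additive
total energy `E = E(p₁) + E(p₂)`, `E(p) = 2(1+κ²) − 4κ cos p`.  Thus the opposite
ordering is diagonalized by `S̃(p₁,p₂,κ) = S(p₁,p₂,κ⁻¹)`. -/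
theorem two_magnon_bethe_QtQ (κ : ℂ) (hκ : κ ≠ 0) (p₁ p₂ : ℝ)
    (A : ℂ) (hA : A = 1 + Complex.exp (Complex.I * ((p₁ : ℂ) + (p₂ : ℂ))))
    (hden : A - 2 * κ⁻¹ * Complex.exp (Complex.I * (p₁ : ℂ)) ≠ 0)
    (St : ℂ) (hSt : St = -(A - 2 * κ⁻¹ * Complex.exp (Complex.I * (p₂ : ℂ))) /
      (A - 2 * κ⁻¹ * Complex.exp (Complex.I * (p₁ : ℂ))))
    (ψ : ℤ → ℤ → ℂ)
    (hψ : ∀ x y : ℤ, ψ x y =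
      Complex.exp (Complex.I * ((p₁ : ℂ) * (x : ℂ) + (p₂ : ℂ) * (y : ℂ))) +
      St * Complex.exp (Complex.I * ((p₂ : ℂ) * (x : ℂ) + (p₁ : ℂ) * (y : ℂ))))
    (E : ℂ)
    (hE : E = (2 * (1 + κ ^ 2) - 4 * κ * (Real.cos p₁ : ℂ)) +
      (2 * (1 + κ ^ 2) - 4 * κ * (Real.cos p₂ : ℂ))) :
    (∀ x y : ℤ, y > x + 1 →
      (4 + 4 * κ ^ 2) * ψ x y -
        2 * κ * (ψ (x - 1) y + ψ (x + 1) y + ψ x (y - 1) + ψ x (y + 1)) = E * ψ x y) ∧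
    (∀ x : ℤ, 4 * κ ^ 2 * ψ x (x + 1) - 2 * κ * ψ (x - 1) (x + 1) - 2 * κ * ψ x (x + 2) =
      E * ψ x (x + 1)) := by
  subst hA hSt hE
  rw [Complex.ofReal_cos, Complex.ofReal_cos]
  exact (two_magnon_bethe_QtQ_general hκ hden hψ).imp_left fun hbulk x y _ ↦ hbulk x y
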